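/- arXiv:math/0603483 — 5 statements merged into one kernel-verified Lean document; each statement's English description precedes it below -/
import Mathlib

section
/- Let 𝓗 be a Hilbert space and let φ : SL(2,ℝ) → U(𝓗) be a continuous unitary representation, i.e. a group homomorphism into the group of unitary automorphisms of 𝓗 such that for every v ∈ 𝓗 the map g ↦ φ(g)v is continuous. If a vector v ∈ 𝓗 satisfies φ(u)v = v for every u in the upper unipotent subgroup U = {[[1,t],[0,1]] : t ∈ ℝ}, then φ(g)v = v for every g ∈ SL(2,ℝ). -/
open Matrix

/-- `SL(2,ℝ)`. -/
abbrev SL2R := Matrix.SpecialLinearGroup (Fin 2) ℝ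

/-- The standard topology on `SL(2,ℝ)`, as a subspace of the 2×2 real matrices. -/
noncomputable instance : TopologicalSpace SL2R := instTopologicalSpaceSubtype

/-- The upper unipotent element `[[1, t], [0, 1]]` of `SL(2,ℝ)`. -/
def upperUnipotent (t : ℝ) : SL2R :=
  ⟨!![1, t; 0, 1], by simp [Matrix.det_fin_two_of]⟩

/-!
For an isometric action, the displacement `g ↦ d (g • x, x)` is constant on the double cosets of
the stabilizer of `x`. Hence if double cosets of elements `pᵢ → 1` contain elements `qᵢ → g`, then
`g` fixes `x`. Let `x` be fixed by the upper unipotent group `U` of `SL(2, K)`. A matrix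
`!![a, 0; c, a⁻¹]` with `c ≠ 0` lies in `U !![1, 0; c, 1] U`, so letting `c → 0` shows that `x` is
fixed by the diagonal group. Conjugation by diagonal matrices contracts the lower unipotent group
to `1`, so that group fixes `x` as well, and the two unipotent groups generate `SL(2, K)`.
-/

open Filter Topology MulAction DoubleCoset
open scoped MatrixGroups
open Matrix.SpecialLinearGroup (diag2 diag2_coe' transvection_coe)

section IsometricAction

variable {G X : Type*} [Group G] [MulAction G X] {x : X}

theorem edist_smul_self_of_mem_doubleCoset [PseudoEMetricSpace X] [IsIsometricSMul G X] {g h : G}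
    (hh : h ∈ doubleCoset g (stabilizer G x) (stabilizer G x)) :
    edist (h • x) x = edist (g • x) x := by
  obtain ⟨s, hs, t, ht, rfl⟩ := mem_doubleCoset.mp hh
  rw [SetLike.mem_coe, mem_stabilizer_iff] at hs ht
  calc edist ((s * g * t) • x) x = edist (s • g • x) (s • x) := by
        rw [mul_smul, mul_smul, ht, hs]
    _ = edist (g • x) x := edist_smul_left s _ _

theorem mem_stabilizer_of_tendsto_doubleCoset [TopologicalSpace G] [EMetricSpace X]
    [IsIsometricSMul G X] (hx : Continuous fun g : G ↦ g • x)
    {ι : Type*} {l : Filter ι} [l.NeBot] {p q : ι → G} {g : G}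
    (hp : Tendsto p l (𝓝 1)) (hq : Tendsto q l (𝓝 g))
    (hpq : ∀ᶠ i in l, q i ∈ doubleCoset (p i) (stabilizer G x) (stabilizer G x)) :
    g ∈ stabilizer G x := by
  have displacement_continuous : Continuous fun g : G ↦ edist (g • x) x :=
    hx.edist continuous_const
  have tendsto_displacement : Tendsto (fun i ↦ edist (q i • x) x) l (𝓝 (edist (g • x) x)) :=
    (displacement_continuous.tendsto g).comp hq
  have tendsto_zero : Tendsto (fun i ↦ edist (q i • x) x) l (𝓝 0) := by
    have tendsto_displacement_p := (displacement_continuous.tendsto 1).comp hp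
    rw [one_smul, edist_self] at tendsto_displacement_p
    exact tendsto_displacement_p.congr' (hpq.mono fun i hi ↦
      (edist_smul_self_of_mem_doubleCoset hi).symm)
  exact mem_stabilizer_iff.mpr
    (edist_eq_zero.mp (tendsto_nhds_unique tendsto_displacement tendsto_zero))

end IsometricAction

section Transvection

@[fun_prop]
theorem continuous_transvection {n R : Type*} [Fintype n] [DecidableEq n] [CommRing R]
    [TopologicalSpace R] [ContinuousAdd R] {i j : n} (hij : i ≠ j) :
    Continuous (SpecialLinearGroup.transvection hij : R → SpecialLinearGroup n R) := by
  refine Continuous.subtype_mk (continuous_matrix fun k l ↦ ?_) _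
  exact continuous_const.add (continuous_id.if_const _ continuous_const)

theorem coe_transvection_zero_one {R : Type*} [CommRing R] (t : R) :
    (SpecialLinearGroup.transvection zero_ne_one t : SL(2, R)).1 = !![1, t; 0, 1] := by
  ext i j
  fin_cases i <;> fin_cases j <;> simp [transvection_coe]

theorem coe_transvection_one_zero {R : Type*} [CommRing R] (t : R) :
    (SpecialLinearGroup.transvection one_ne_zero t : SL(2, R)).1 = !![1, 0; t, 1] := by
  ext i j
  fin_cases i <;> fin_cases j <;> simp [transvection_coe]

variable {K : Type*} [Field K]

theorem SL2_eq_upper_mul_lower_mul_upper {g : SL(2, K)} (hg : g 1 0 ≠ 0) :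
    g = SpecialLinearGroup.transvection zero_ne_one ((g 0 0 - 1) / g 1 0) *
      SpecialLinearGroup.transvection one_ne_zero (g 1 0) *
      SpecialLinearGroup.transvection zero_ne_one ((g 1 1 - 1) / g 1 0) := by
  have hdet : g 0 0 * g 1 1 - g 0 1 * g 1 0 = 1 := (det_fin_two _).symm.trans g.2
  have h01 : g 0 1 = g 0 0 * ((g 1 1 - 1) / g 1 0) + (g 0 0 - 1) / g 1 0 := by
    field_simp
    linear_combination -hdet
  ext i j
  fin_cases i <;> fin_cases j <;>
    simp [coe_transvection_zero_one, coe_transvection_one_zero, h01, hg, mul_div_cancel₀]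

theorem diag2_mul_transvection_mul_inv {a : K} (ha : a ≠ 0) (c : K) :
    diag2 a ha * SpecialLinearGroup.transvection one_ne_zero (a ^ 2 * c) * (diag2 a ha)⁻¹ =
      SpecialLinearGroup.transvection one_ne_zero c := by
  rw [mul_inv_eq_iff_eq_mul]
  have h10 : a⁻¹ * (a ^ 2 * c) = c * a := by field_simp
  ext i j
  fin_cases i <;> fin_cases j <;> simp [diag2_coe', coe_transvection_one_zero, h10]

end Transvection

section SL2

variable {K X : Type*} [Field K] [TopologicalSpace K] [IsTopologicalRing K]
  [(𝓝[≠] (0 : K)).NeBot] [EMetricSpace X] [MulAction SL(2, K) X] [IsIsometricSMul SL(2, K) X]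
  {x : X}

theorem diag2_mem_stabilizer (hx : Continuous fun g : SL(2, K) ↦ g • x)
    (hU : ∀ t : K, SpecialLinearGroup.transvection zero_ne_one t ∈ stabilizer SL(2, K) x)
    {a : K} (ha : a ≠ 0) : diag2 a ha ∈ stabilizer SL(2, K) x := by
  let q (c : K) : SL(2, K) := SpecialLinearGroup.transvection one_ne_zero c * diag2 a ha
  have q_one_zero (c : K) : q c 1 0 = c * a := by
    simp [q, diag2_coe', coe_transvection_one_zero]
  have q_continuous : Continuous q := by fun_prop
  have hq : Tendsto q (𝓝[≠] 0) (𝓝 (diag2 a ha)) :=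
    (q_continuous.tendsto' 0 _ (by simp [q])).mono_left nhdsWithin_le_nhds
  have hp : Tendsto (fun c ↦ SpecialLinearGroup.transvection one_ne_zero (q c 1 0))
      (𝓝[≠] 0) (𝓝 (1 : SL(2, K))) := by
    simp only [q_one_zero]
    exact (Continuous.tendsto' (by fun_prop) 0 1 (by simp)).mono_left nhdsWithin_le_nhds
  refine mem_stabilizer_of_tendsto_doubleCoset hx hp hq ?_
  filter_upwards [self_mem_nhdsWithin] with c hc
  have hqc : q c 1 0 ≠ 0 := q_one_zero c ▸ mul_ne_zero hc ha
  exact mem_doubleCoset.mpr ⟨_, hU _, _, hU _, SL2_eq_upper_mul_lower_mul_upper hqc⟩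

theorem transvection_one_zero_mem_stabilizer (hx : Continuous fun g : SL(2, K) ↦ g • x)
    (hA : ∀ (a : K) (ha : a ≠ 0), diag2 a ha ∈ stabilizer SL(2, K) x) (c : K) :
    SpecialLinearGroup.transvection one_ne_zero c ∈ stabilizer SL(2, K) x := by
  have hp : Tendsto (fun a ↦ SpecialLinearGroup.transvection one_ne_zero (a ^ 2 * c))
      (𝓝[≠] 0) (𝓝 (1 : SL(2, K))) :=
    (Continuous.tendsto' (by fun_prop) 0 1 (by simp)).mono_left nhdsWithin_le_nhds
  refine mem_stabilizer_of_tendsto_doubleCoset hx hp tendsto_const_nhds ?_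
  filter_upwards [self_mem_nhdsWithin] with a ha
  exact mem_doubleCoset.mpr ⟨_, hA a ha, _, inv_mem (hA a ha),
    (diag2_mul_transvection_mul_inv ha c).symm⟩

theorem mautner_SL2R_general (hx : Continuous fun g : SL(2, K) ↦ g • x)
    (hU : ∀ t : K, (SpecialLinearGroup.transvection zero_ne_one t : SL(2, K)) • x = x)
    (g : SL(2, K)) : g • x = x := by
  have hL := transvection_one_zero_mem_stabilizer hx fun _ ↦ diag2_mem_stabilizer hx hU
  suffices g ∈ stabilizer SL(2, K) x from this
  refine SL2.transvection_induction (· ∈ stabilizer SL(2, K) x) (fun i j hij c ↦ ?_)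
    (fun _ _ ↦ mul_mem) g
  fin_cases i <;> fin_cases j
  exacts [absurd rfl hij, hU c, hL c, absurd rfl hij]

end SL2

theorem upperUnipotent_eq_transvection (t : ℝ) :
    upperUnipotent t = SpecialLinearGroup.transvection zero_ne_one t :=
  Subtype.ext (coe_transvection_zero_one t).symm

/-- The action of `G` on `E` underlying an isometric representation `φ`, in the form expected by
`IsIsometricSMul`. It is not an instance because it depends on `φ`. -/
abbrev isometricRepresentationAction {G R E : Type*} [Monoid G] [Ring R]
    [SeminormedAddCommGroup E] [Module R E] (φ : G →* (E ≃ₗᵢ[R] E)) : MulAction G E where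
  smul g := φ g
  one_smul w := DFunLike.congr_fun (map_one φ) w
  mul_smul g h w := DFunLike.congr_fun (map_mul φ g h) w

/-- **Mautner phenomenon for `SL(2,ℝ)`.**  If `φ` is a continuous unitary representation of
`SL(2,ℝ)` on a Hilbert space `𝓗` and `v ∈ 𝓗` is fixed by the upper unipotent subgroup
`U = {[[1,t],[0,1]] : t ∈ ℝ}`, then `v` is fixed by all of `SL(2,ℝ)`. -/
theorem mautner_SL2R
    {𝕜 : Type*} [RCLike 𝕜] {𝓗 : Type*} [NormedAddCommGroup 𝓗]
    [InnerProductSpace 𝕜 𝓗] [CompleteSpace 𝓗]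
    (φ : SL2R →* (𝓗 ≃ₗᵢ[𝕜] 𝓗))
    (hφ : ∀ v : 𝓗, Continuous fun g : SL2R => φ g v)
    (v : 𝓗) (hv : ∀ t : ℝ, φ (upperUnipotent t) v = v) :
    ∀ g : SL2R, φ g v = v := by
  let := isometricRepresentationAction φ
  have : IsIsometricSMul SL2R 𝓗 := ⟨fun g ↦ (φ g).isometry⟩
  exact mautner_SL2R_general (hφ v) fun t ↦ upperUnipotent_eq_transvection t ▸ hv t
end

section
/- Let 𝓗 be a Hilbert space and let φ : SL(2,ℝ) → U(𝓗) be a continuous unitary representation (a homomorphism into the unitary group such that g ↦ φ(g)v is continuous for each v). If a vector v ∈ 𝓗 satisfies φ(u)v = v for every u in the upper unipotent subgroup U = {[[1,t],[0,1]] : t ∈ ℝ}, then v is also fixed by the diagonal subgroup: φ(diag(e^t, e^{-t}))v = v for all t ∈ ℝ. -/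
open Matrix

/-- The diagonal element `diag(e^t, e^{-t})` of `SL(2,ℝ)`. -/
noncomputable def diagExp (t : ℝ) : SL2R :=
  ⟨!![Real.exp t, 0; 0, Real.exp (-t)], by
    simp [Matrix.det_fin_two_of, ← Real.exp_add]⟩

/-!
The Mautner phenomenon: if `u` and `w` fix `x`, then an isometry group moves `x` by `u * g * w`
exactly as far as by `g`, so every limit of products `u * g * w` with `g → 1` also fixes `x`.
In `SL(2,ℝ)`, multiplying `[[1, 0], [s, 1]]` on both sides by suitable upper unipotents, with
parameters of order `1 / s`, gives `[[e^t, 0], [s, e^{-t}]]`, which tends to `diag(e^t, e^{-t})`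
as `s → 0`.
-/

open Filter Topology

section Mautner

variable {G X ι : Type*} [Monoid G] [EMetricSpace X] [MulAction G X] [IsIsometricSMul G X]
  {x : X}

lemma edist_mul_mul_smul_self {u w : G} (hu : u • x = x) (hw : w • x = x) (g : G) :
    edist ((u * g * w) • x) x = edist (g • x) x := calc
  edist ((u * g * w) • x) x = edist (u • g • x) (u • x) := by rw [mul_smul, mul_smul, hw, hu]
  _ = edist (g • x) x := edist_smul_left u _ _

theorem smul_eq_self_of_tendsto_mul_mul [TopologicalSpace G]
    (hx : Continuous fun g : G => g • x) {l : Filter ι} [l.NeBot] {u g w : ι → G} {h : G}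
    (hu : ∀ i, u i • x = x) (hw : ∀ i, w i • x = x) (hg : Tendsto g l (𝓝 1))
    (hh : Tendsto (fun i => u i * g i * w i) l (𝓝 h)) : h • x = x := by
  have displacement : Continuous fun a : G => edist (a • x) x := hx.edist continuous_const
  have to_zero : Tendsto (fun i => edist (g i • x) x) l (𝓝 0) := by
    simpa [Function.comp_def] using (displacement.tendsto 1).comp hg
  have to_displacement : Tendsto (fun i => edist (g i • x) x) l (𝓝 (edist (h • x) x)) := by
    simpa only [Function.comp_def, edist_mul_mul_smul_self (hu _) (hw _)] using
      (displacement.tendsto h).comp hh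
  exact edist_eq_zero.mp (tendsto_nhds_unique to_displacement to_zero)

end Mautner

/-- The lower unipotent element `[[1, 0], [s, 1]]` of `SL(2,ℝ)`, which serves as the group element
near `1` in the Mautner argument. -/
def lowerUnipotent (s : ℝ) : SL2R :=
  ⟨!![1, 0; s, 1], by simp [Matrix.det_fin_two_of]⟩

@[simp]
lemma lowerUnipotent_zero : lowerUnipotent 0 = 1 :=
  Subtype.ext Matrix.one_fin_two.symm

lemma continuous_lowerUnipotent : Continuous lowerUnipotent := by
  have matrix_continuous : Continuous fun s : ℝ => !![1, 0; s, 1] := by fun_prop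
  exact matrix_continuous.subtype_mk _

lemma tendsto_lowerUnipotent_zero : Tendsto lowerUnipotent (𝓝 0) (𝓝 1) := by
  simpa using continuous_lowerUnipotent.tendsto 0

instance : ContinuousMul SL2R :=
  Matrix.SpecialLinearGroup.topologicalGroup.toContinuousMul

lemma upperUnipotent_mul_lowerUnipotent_mul_upperUnipotent (t : ℝ) {s : ℝ} (hs : s ≠ 0) :
    upperUnipotent ((Real.exp t - 1) / s) * lowerUnipotent s *
      upperUnipotent ((Real.exp (-t) - 1) / s) =
    lowerUnipotent (s * Real.exp (-t)) * diagExp t := by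
  apply Subtype.ext
  simp only [Matrix.SpecialLinearGroup.coe_mul]
  simp only [upperUnipotent, lowerUnipotent, diagExp, Matrix.mul_fin_two, Real.exp_neg]
  congrm !![?_, ?_; ?_, ?_] <;> field_simp <;> ring

lemma tendsto_upperUnipotent_mul_lowerUnipotent_mul_upperUnipotent (t : ℝ) :
    Tendsto (fun s : ℝ => upperUnipotent ((Real.exp t - 1) / s) * lowerUnipotent s *
      upperUnipotent ((Real.exp (-t) - 1) / s)) (𝓝[≠] 0) (𝓝 (diagExp t)) := by
  have limit : Tendsto (fun s => lowerUnipotent (s * Real.exp (-t)) * diagExp t)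
      (𝓝 0) (𝓝 (diagExp t)) := by
    have product_continuous : Continuous fun s => lowerUnipotent (s * Real.exp (-t)) * diagExp t :=
      (continuous_lowerUnipotent.comp (continuous_mul_const _)).mul continuous_const
    simpa using product_continuous.tendsto 0
  refine (limit.mono_left nhdsWithin_le_nhds).congr' ?_
  filter_upwards [self_mem_nhdsWithin] with s hs
  exact (upperUnipotent_mul_lowerUnipotent_mul_upperUnipotent t hs).symm

theorem mautner_diagonal_SL2R_general {X : Type*} [EMetricSpace X] [MulAction SL2R X]
    [IsIsometricSMul SL2R X] {x : X} (hx : Continuous fun g : SL2R => g • x)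
    (hu : ∀ t : ℝ, upperUnipotent t • x = x) (t : ℝ) : diagExp t • x = x :=
  smul_eq_self_of_tendsto_mul_mul hx (fun _ => hu _) (fun _ => hu _)
    (tendsto_lowerUnipotent_zero.mono_left nhdsWithin_le_nhds)
    (tendsto_upperUnipotent_mul_lowerUnipotent_mul_upperUnipotent t)

/-- If `φ` is a continuous unitary representation of `SL(2,ℝ)` on a Hilbert space `𝓗`
and `v ∈ 𝓗` is fixed by the upper unipotent subgroup `U = {[[1,t],[0,1]] : t ∈ ℝ}`,
then `v` is also fixed by the diagonal subgroup `{diag(e^t, e^{-t}) : t ∈ ℝ}`. -/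
theorem mautner_diagonal_SL2R
    {𝕜 : Type*} [RCLike 𝕜] {𝓗 : Type*} [NormedAddCommGroup 𝓗]
    [InnerProductSpace 𝕜 𝓗] [CompleteSpace 𝓗]
    (φ : SL2R →* (𝓗 ≃ₗᵢ[𝕜] 𝓗))
    (hφ : ∀ v : 𝓗, Continuous fun g : SL2R => φ g v)
    (v : 𝓗) (hv : ∀ t : ℝ, φ (upperUnipotent t) v = v) :
    ∀ t : ℝ, φ (diagExp t) v = v := by
  let _ : MulAction SL2R 𝓗 :=
    { smul := fun g w => φ g w
      one_smul := fun w => DFunLike.congr_fun (map_one φ) w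
      mul_smul := fun g h w => DFunLike.congr_fun (map_mul φ g h) w }
  have : IsIsometricSMul SL2R 𝓗 := ⟨fun g => (φ g).isometry⟩
  exact mautner_diagonal_SL2R_general (hφ v) hv
end

section
/- Let G be a Lie group, Γ < G a discrete subgroup, X = Γ\G with the right translation action of G, and let H < G be a subgroup isomorphic as a topological group to SL(2,ℝ) via an isomorphism θ : SL(2,ℝ) → H. Let μ be an H-invariant and H-ergodic Borel probability measure on X, and let U = θ({[[1,t],[0,1]] : t ∈ ℝ}) be the one-parameter unipotent subgroup of H corresponding to the upper unipotent subgroup of SL(2,ℝ). Then μ is also U-ergodic: every measurable subset of X invariant under right translation by all elements of U has μ-measure 0 or 1. -/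
open MeasureTheory Manifold Matrix

/-- The space of right cosets `Γ\G`. -/
def RightQuot {G : Type*} [Group G] (Γ : Subgroup G) : Type _ :=
  Quotient (QuotientGroup.rightRel Γ)

section Basic

variable {G : Type*} [Group G] [TopologicalSpace G]

instance (Γ : Subgroup G) : TopologicalSpace (RightQuot Γ) :=
  inferInstanceAs (TopologicalSpace (Quotient (QuotientGroup.rightRel Γ)))

noncomputable instance (Γ : Subgroup G) : MeasurableSpace (RightQuot Γ) := borel _

instance (Γ : Subgroup G) : BorelSpace (RightQuot Γ) := ⟨rfl⟩

/-- Right translation by `g ∈ G` on the right coset space `Γ\G`,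
sending `Γh` to `Γhg`. -/
def rightTranslate (Γ : Subgroup G) (g : G) : RightQuot Γ → RightQuot Γ :=
  Quotient.map' (· * g) (fun a b h => by
    rw [QuotientGroup.rightRel_apply] at h ⊢
    have : b * g * (a * g)⁻¹ = b * a⁻¹ := by group
    rw [this]; exact h)

end Basic

/-!
For a Borel set `s` and a measure-preserving action, `g ↦ μ (g • s ∆ s)` is a seminorm on the
group; it vanishes exactly on the a.e. stabilizer of `s` and tends to `0` at the identity.
Its values do not change under multiplication on either side by elements of norm zero, so it
vanishes at every limit of products `u * g * v` with `u`, `v` of norm zero and `g → 1`. In `SL₂`,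
sandwiching small lower unipotents between upper unipotents produces the diagonal matrices, and
conjugating by diagonal matrices contracts every lower unipotent to `1`. Hence a set which is
a.e. invariant under the upper unipotents is a.e. invariant under the whole group.
-/

open Filter Topology
open scoped ENNReal MatrixGroups Pointwise symmDiff

section MeasureAlgebraContinuity

theorem tendsto_ennreal_tsum_of_dominated_convergence {ι β : Type*} {l : Filter ι}
    [l.IsCountablyGenerated] {F : ι → β → ℝ≥0∞} {f bound : β → ℝ≥0∞}
    (hbound : ∑' b, bound b ≠ ∞) (hle : ∀ i b, F i b ≤ bound b)
    (hlim : ∀ b, Tendsto (F · b) l (𝓝 (f b))) :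
    Tendsto (fun i ↦ ∑' b, F i b) l (𝓝 (∑' b, f b)) := by
  let _ : MeasurableSpace β := ⊤
  simp only [← lintegral_count] at hbound ⊢
  exact tendsto_lintegral_filter_of_dominated_convergence bound
    (.of_forall fun _ ↦ measurable_from_top) (.of_forall fun i ↦ .of_forall (hle i)) hbound
    (.of_forall hlim)

variable {X Y ι : Type*} [MeasurableSpace X] [TopologicalSpace Y] [MeasurableSpace Y]
  [BorelSpace Y] {μ : Measure X} {ν : Measure Y} [IsFiniteMeasure μ]
  {l : Filter ι} [l.IsCountablyGenerated] {f : ι → X → Y} {g : X → Y} {s : Set Y}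

theorem tendsto_measure_symmDiff_preimage_of_isOpen (hs : IsOpen s)
    (hf : ∀ i, MeasurePreserving (f i) μ ν) (hg : MeasurePreserving g μ ν)
    (hlim : ∀ x, Tendsto (f · x) l (𝓝 (g x))) :
    Tendsto (fun i ↦ μ ((f i ⁻¹' s) ∆ (g ⁻¹' s))) l (𝓝 0) := by
  have hfs i : MeasurableSet (f i ⁻¹' s) := (hf i).measurable hs.measurableSet
  have hgs : MeasurableSet (g ⁻¹' s) := hg.measurable hs.measurableSet
  have hloss : Tendsto (fun i ↦ μ (g ⁻¹' s \ f i ⁻¹' s)) l (𝓝 0) := by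
    rw [← measure_empty (μ := μ)]
    refine tendsto_measure_of_tendsto_indicator_of_isFiniteMeasure l μ
      (fun i ↦ hgs.diff (hfs i)) fun x ↦ ?_
    by_cases hx : g x ∈ s
    · filter_upwards [(hlim x).eventually_mem (hs.mem_nhds hx)] with i hi
      simp [hi]
    · simp [hx]
  have hgain i : μ (f i ⁻¹' s \ g ⁻¹' s) = μ (g ⁻¹' s \ f i ⁻¹' s) := by
    refine measure_sdiff_symm (hfs i).nullMeasurableSet hgs.nullMeasurableSet ?_
      (measure_ne_top _ _)
    rw [(hf i).measure_preimage hs.nullMeasurableSet, hg.measure_preimage hs.nullMeasurableSet]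
  simpa [measure_symmDiff_eq (hfs _).nullMeasurableSet hgs.nullMeasurableSet, hgain]
    using hloss.add hloss

theorem tendsto_measure_symmDiff_preimage (hs : MeasurableSet s)
    (hf : ∀ i, MeasurePreserving (f i) μ ν) (hg : MeasurePreserving g μ ν)
    (hlim : ∀ x, Tendsto (f · x) l (𝓝 (g x))) :
    Tendsto (fun i ↦ μ ((f i ⁻¹' s) ∆ (g ⁻¹' s))) l (𝓝 0) := by
  induction s, hs using MeasurableSet.induction_on_open with
  | isOpen s hs => exact tendsto_measure_symmDiff_preimage_of_isOpen hs hf hg hlim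
  | compl t _ ih => simpa only [Set.preimage_compl, compl_symmDiff_compl] using ih
  | iUnion t hdisj ht ih =>
    have hbound i n : μ ((f i ⁻¹' t n) ∆ (g ⁻¹' t n)) ≤ 2 * μ (g ⁻¹' t n) := calc
      _ ≤ μ (f i ⁻¹' t n) + μ (g ⁻¹' t n) :=
        (measure_mono Set.symmDiff_subset_union).trans (measure_union_le _ _)
      _ = 2 * μ (g ⁻¹' t n) := by
        rw [(hf i).measure_preimage (ht n).nullMeasurableSet,
          hg.measure_preimage (ht n).nullMeasurableSet, two_mul]
    have hsum : ∑' n, 2 * μ (g ⁻¹' t n) ≠ ∞ := by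
      rw [ENNReal.tsum_mul_left, ← measure_iUnion (fun _ _ h ↦ (hdisj h).preimage g)
        fun n ↦ hg.measurable (ht n)]
      finiteness
    have htsum := tendsto_ennreal_tsum_of_dominated_convergence hsum hbound ih
    rw [tsum_zero] at htsum
    refine tendsto_of_tendsto_of_tendsto_of_le_of_le tendsto_const_nhds htsum
      (fun _ ↦ zero_le) fun i ↦ ?_
    simp only [Set.preimage_iUnion]
    exact (measure_mono Set.iUnion_symmDiff_iUnion_subset).trans (measure_iUnion_le _)

end MeasureAlgebraContinuity

section SymmDiffSeminorm

variable {G X : Type*} [Group G] [MulAction G X] [MeasurableSpace X]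

/-- The displacement `g ↦ μ (g • s ∆ s)` of a set `s` in the measure algebra of `μ`, as a seminorm
on the acting group. -/
noncomputable def symmDiffSeminorm (G : Type*) {X : Type*} [Group G] [MulAction G X]
    [MeasurableSpace X] (μ : Measure X) [IsFiniteMeasure μ] [SMulInvariantMeasure G X μ]
    (s : Set X) : GroupSeminorm G where
  toFun g := μ.real ((g • s) ∆ s)
  map_one' := by simp
  mul_le' g h := by
    calc μ.real (((g * h) • s) ∆ s)
        ≤ μ.real (((g * h) • s) ∆ (g • s)) + μ.real ((g • s) ∆ s) := measureReal_symmDiff_le _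
      _ = μ.real ((g • s) ∆ s) + μ.real ((h • s) ∆ s) := by
        rw [mul_smul, ← Set.smul_set_symmDiff, measureReal_def, measure_smul, ← measureReal_def,
          add_comm]
  inv' g := by
    rw [measureReal_def, ← measure_smul μ g, Set.smul_set_symmDiff, smul_inv_smul, symmDiff_comm,
      measureReal_def]

variable {μ : Measure X} [IsFiniteMeasure μ] [SMulInvariantMeasure G X μ] {s : Set X}

theorem symmDiffSeminorm_eq_zero_iff {g : G} : symmDiffSeminorm G μ s g = 0 ↔ g • s =ᵐ[μ] s := by
  rw [← measure_symmDiff_eq_zero_iff]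
  exact measureReal_eq_zero_iff

theorem tendsto_symmDiffSeminorm_nhds_one [TopologicalSpace G] [FirstCountableTopology G]
    [TopologicalSpace X] [BorelSpace X] [ContinuousSMul G X] (hs : MeasurableSet s) :
    Tendsto (symmDiffSeminorm G μ s) (𝓝 1) (𝓝 0) := by
  have hlim := tendsto_measure_symmDiff_preimage (l := 𝓝 (1 : G)) (f := fun g x ↦ g • x) (g := id)
    hs (fun g ↦ measurePreserving_smul g μ) (.id μ) fun _ ↦ tendsto_id.one_smul_const _
  have hreal := (ENNReal.tendsto_toReal ENNReal.zero_ne_top).comp hlim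
  refine hreal.congr fun g ↦ ?_
  rw [← map_inv_eq_map]
  simp only [Function.comp_apply, Set.preimage_smul, Set.preimage_id]
  rfl

end SymmDiffSeminorm

section Mautner

theorem groupSeminorm_eq_zero_of_tendsto_mul_mul {ι G : Type*} [Group G] [TopologicalSpace G]
    [IsTopologicalGroup G] {p : GroupSeminorm G} (hp : Tendsto p (𝓝 1) (𝓝 0)) {l : Filter ι}
    [l.NeBot] {u g v : ι → G} {x : G} (hu : ∀ i, p (u i) = 0) (hv : ∀ i, p (v i) = 0)
    (hg : Tendsto g l (𝓝 1)) (hx : Tendsto (fun i ↦ u i * g i * v i) l (𝓝 x)) : p x = 0 := by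
  have hle i : p x ≤ p (x / (u i * g i * v i)) + p (g i) := calc
    p x = p (x / (u i * g i * v i) * (u i * g i * v i)) := by rw [div_mul_cancel]
    _ ≤ p (x / (u i * g i * v i)) + (p (u i) + p (g i) + p (v i)) := by
      grw [map_mul_le_add, map_mul_le_add p (u i * g i), map_mul_le_add p (u i)]
    _ = p (x / (u i * g i * v i)) + p (g i) := by rw [hu, hv, zero_add, add_zero]
  have herr : Tendsto (fun i ↦ x / (u i * g i * v i)) l (𝓝 1) := by
    simpa using hx.const_div' x
  have hlim : Tendsto (fun i ↦ p (x / (u i * g i * v i)) + p (g i)) l (𝓝 0) := by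
    simpa using (hp.comp herr).add (hp.comp hg)
  exact (ge_of_tendsto' hlim hle).antisymm (apply_nonneg p x)

end Mautner

section SpecialLinearGroupTopology

variable {n R : Type*} [Fintype n] [DecidableEq n] [CommRing R] [TopologicalSpace R]

instance specialLinearGroup_firstCountableTopology [FirstCountableTopology R] :
    FirstCountableTopology (SpecialLinearGroup n R) :=
  have : FirstCountableTopology (Matrix n n R) :=
    inferInstanceAs (FirstCountableTopology (n → n → R))
  IsInducing.subtypeVal.firstCountableTopology

instance specialLinearGroup_secondCountableTopology [SecondCountableTopology R] :
    SecondCountableTopology (SpecialLinearGroup n R) :=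
  have : SecondCountableTopology (Matrix n n R) :=
    inferInstanceAs (SecondCountableTopology (n → n → R))
  IsInducing.subtypeVal.secondCountableTopology

theorem continuous_specialLinearGroup_transvection [ContinuousAdd R] {i j : n} (hij : i ≠ j) :
    Continuous (Matrix.SpecialLinearGroup.transvection hij : R → SpecialLinearGroup n R) :=
  have hsingle : Continuous fun b : R ↦ Matrix.single i j b :=
    continuous_matrix fun _ _ ↦ continuous_id.if_const _ continuous_const
  Continuous.subtype_mk (continuous_const.add hsingle) _

instance specialLinearGroup_locallyCompactSpace [IsTopologicalRing R] [T1Space R]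
    [LocallyCompactSpace R] : LocallyCompactSpace (SpecialLinearGroup n R) :=
  have : LocallyCompactSpace (Matrix n n R) := inferInstanceAs (LocallyCompactSpace (n → n → R))
  SpecialLinearGroup.isClosedEmbedding_val.locallyCompactSpace

end SpecialLinearGroupTopology

section SL2

open Matrix.SpecialLinearGroup (diag2 diag2n)

/-- The upper unipotent matrix `[[1, b], [0, 1]]` over a commutative ring. -/
abbrev upperTransvection {R : Type*} [CommRing R] (b : R) : SL(2, R) :=
  Matrix.SpecialLinearGroup.transvection zero_ne_one b

/-- The lower unipotent matrix `[[1, 0], [b, 1]]` over a commutative ring. -/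
abbrev lowerTransvection {R : Type*} [CommRing R] (b : R) : SL(2, R) :=
  Matrix.SpecialLinearGroup.transvection one_ne_zero b

section CommRing

variable {R : Type*} [CommRing R]

theorem coe_upperTransvection (b : R) :
    (upperTransvection b : Matrix (Fin 2) (Fin 2) R) = !![1, b; 0, 1] := by
  ext i j
  fin_cases i <;> fin_cases j <;> simp [Matrix.SpecialLinearGroup.transvection_coe]

theorem coe_lowerTransvection (b : R) :
    (lowerTransvection b : Matrix (Fin 2) (Fin 2) R) = !![1, 0; b, 1] := by
  ext i j
  fin_cases i <;> fin_cases j <;> simp [Matrix.SpecialLinearGroup.transvection_coe]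

theorem tendsto_lowerTransvection [TopologicalSpace R] [ContinuousAdd R] {ι : Type*}
    {l : Filter ι} {f : ι → R} (hf : Tendsto f l (𝓝 0)) :
    Tendsto (fun i ↦ lowerTransvection (f i)) l (𝓝 1) := by
  simpa using! ((continuous_specialLinearGroup_transvection one_ne_zero).tendsto 0).comp hf

end CommRing

theorem upperUnipotent_eq_upperTransvection (t : ℝ) : upperUnipotent t = upperTransvection t :=
  Subtype.ext (coe_upperTransvection t).symm

variable {𝕜 : Type*} [Field 𝕜]

theorem upper_mul_lower_mul_upper_eq {a ε : 𝕜} (ha : a ≠ 0) (hε : ε ≠ 0) :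
    upperTransvection ((a - 1) / ε) * lowerTransvection ε * upperTransvection ((a⁻¹ - 1) / ε) =
      diag2 a ha * lowerTransvection (a * ε) := by
  ext i j
  simp only [Matrix.SpecialLinearGroup.coe_mul, coe_upperTransvection, coe_lowerTransvection,
    Matrix.SpecialLinearGroup.diag2_coe', Matrix.mul_fin_two]
  fin_cases i <;> fin_cases j <;> simp <;> field_simp <;> ring

theorem diag2_mul_lower_mul_diag2_inv {a : 𝕜} (ha : a ≠ 0) (b : 𝕜) :
    diag2 a ha * lowerTransvection (a ^ 2 * b) * (diag2 a ha)⁻¹ = lowerTransvection b := by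
  ext i j
  simp only [Matrix.SpecialLinearGroup.diag2_inv, Matrix.SpecialLinearGroup.coe_mul,
    coe_lowerTransvection, Matrix.SpecialLinearGroup.diag2_coe', Matrix.mul_fin_two]
  fin_cases i <;> fin_cases j <;> simp <;> field_simp

theorem diag2n_one_zero_eq_diag2 {a : 𝕜} (ha : a ≠ 0) :
    diag2n one_ne_zero a ha = diag2 a⁻¹ (inv_ne_zero ha) := by
  ext i j
  fin_cases i <;> fin_cases j <;> simp [Matrix.SpecialLinearGroup.diag2n_coe]

variable [TopologicalSpace 𝕜] [(𝓝[≠] (0 : 𝕜)).NeBot]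

theorem comap_val_ne_zero_neBot : (comap (Subtype.val : {a : 𝕜 // a ≠ 0} → 𝕜) (𝓝 0)).NeBot :=
  mem_closure_iff_comap_neBot.1 (dense_compl_singleton 0 0)

variable [IsTopologicalRing 𝕜] {p : GroupSeminorm SL(2, 𝕜)}

theorem groupSeminorm_diag2_eq_zero (hp : Tendsto p (𝓝 1) (𝓝 0))
    (hupper : ∀ b, p (upperTransvection b) = 0) {a : 𝕜} (ha : a ≠ 0) :
    p (diag2 a ha) = 0 := by
  have := comap_val_ne_zero_neBot (𝕜 := 𝕜)
  have hε : Tendsto Subtype.val (comap (Subtype.val : {a : 𝕜 // a ≠ 0} → 𝕜) (𝓝 0)) (𝓝 0) :=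
    tendsto_comap
  refine groupSeminorm_eq_zero_of_tendsto_mul_mul hp
    (u := fun ε : {a : 𝕜 // a ≠ 0} ↦ upperTransvection ((a - 1) / ε.1))
    (v := fun ε ↦ upperTransvection ((a⁻¹ - 1) / ε.1))
    (fun _ ↦ hupper _) (fun _ ↦ hupper _) (tendsto_lowerTransvection hε) ?_
  simp only [fun ε : {a : 𝕜 // a ≠ 0} ↦ upper_mul_lower_mul_upper_eq ha ε.2]
  have haε : Tendsto (fun ε : {a : 𝕜 // a ≠ 0} ↦ a * ε.1) (comap Subtype.val (𝓝 0)) (𝓝 0) := by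
    simpa using hε.const_mul a
  simpa using (tendsto_lowerTransvection haε).const_mul (diag2 a ha)

theorem groupSeminorm_lowerTransvection_eq_zero (hp : Tendsto p (𝓝 1) (𝓝 0))
    (hdiag : ∀ (a : 𝕜) (ha : a ≠ 0), p (diag2 a ha) = 0) (b : 𝕜) :
    p (lowerTransvection b) = 0 := by
  have := comap_val_ne_zero_neBot (𝕜 := 𝕜)
  have ha : Tendsto Subtype.val (comap (Subtype.val : {a : 𝕜 // a ≠ 0} → 𝕜) (𝓝 0)) (𝓝 0) :=
    tendsto_comap
  have hab : Tendsto (fun a : {a : 𝕜 // a ≠ 0} ↦ a.1 ^ 2 * b) (comap Subtype.val (𝓝 0)) (𝓝 0) := by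
    simpa using (ha.pow 2).mul_const b
  refine groupSeminorm_eq_zero_of_tendsto_mul_mul hp
    (u := fun a : {a : 𝕜 // a ≠ 0} ↦ diag2 a.1 a.2) (v := fun a ↦ (diag2 a.1 a.2)⁻¹)
    (fun _ ↦ hdiag _ _) (fun _ ↦ by rw [map_inv_eq_map, hdiag])
    (tendsto_lowerTransvection hab) ?_
  simp only [fun a : {a : 𝕜 // a ≠ 0} ↦ diag2_mul_lower_mul_diag2_inv a.2 b, tendsto_const_nhds]

theorem groupSeminorm_eq_zero_of_upperTransvection (hp : Tendsto p (𝓝 1) (𝓝 0))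
    (hupper : ∀ b, p (upperTransvection b) = 0) (g : SL(2, 𝕜)) : p g = 0 := by
  have hdiag (a : 𝕜) (ha : a ≠ 0) : p (diag2 a ha) = 0 := groupSeminorm_diag2_eq_zero hp hupper ha
  induction g using Matrix.SpecialLinearGroup.diagonal_transvection_induction' with
  | hdiag i j hij hc =>
    fin_cases i <;> fin_cases j
    · exact (hij rfl).elim
    · exact hdiag _ hc
    · exact diag2n_one_zero_eq_diag2 hc ▸ hdiag _ _
    · exact (hij rfl).elim
  | htransvec i j hij b =>
    fin_cases i <;> fin_cases j
    · exact (hij rfl).elim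
    · exact hupper b
    · exact groupSeminorm_lowerTransvection_eq_zero hp hdiag b
    · exact (hij rfl).elim
  | hmul A B hA hB =>
    refine le_antisymm ?_ (apply_nonneg p _)
    simpa only [hA, hB, add_zero] using map_mul_le_add p A B

end SL2

section ErgodicAction

variable {G X : Type*} [Group G] [MulAction G X] [MeasurableSpace X] {μ : Measure X}

theorem exists_smul_invariant_ae_eq [MeasurableSpace G] [MeasurableMul G] [MeasurableInv G]
    [MeasurableSMul₂ G X] [SFinite μ] (ν : Measure G) [SFinite ν] [ν.IsMulLeftInvariant]
    [NeZero ν] {s : Set X} (hs : MeasurableSet s) (hinv : ∀ g : G, (g • ·) ⁻¹' s =ᵐ[μ] s) :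
    ∃ t, MeasurableSet t ∧ (∀ g : G, (g • ·) ⁻¹' t = t) ∧ t =ᵐ[μ] s := by
  have horbit : MeasurableSet {y : X × G | y.2⁻¹ • y.1 ∈ s} :=
    (measurable_snd.inv.smul measurable_fst) hs
  refine ⟨{x | ∀ᵐ g ∂ν, g⁻¹ • x ∈ s}, ?_, fun h ↦ ?_, ?_⟩
  · exact measurable_measure_prodMk_left horbit.compl (measurableSet_singleton 0)
  · ext x
    simpa only [Set.mem_preimage, Set.mem_ofPred_eq, _root_.mul_inv_rev, inv_inv, mul_smul] using
      eventually_mul_left_iff ν h⁻¹ (p := fun g ↦ g⁻¹ • x ∈ s)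
  · have hagree : ∀ᵐ x ∂μ, ∀ᵐ g ∂ν, (g⁻¹ • x ∈ s ↔ x ∈ s) := by
      rw [Measure.ae_ae_comm (p := fun x g ↦ (g⁻¹ • x ∈ s ↔ x ∈ s))
        (horbit.iff (measurable_fst hs))]
      exact .of_forall fun g ↦ (hinv g⁻¹).mem_iff
    refine eventuallyEq_set.2 (hagree.mono fun x hx ↦ ?_)
    simp only [Set.mem_ofPred_eq, eventually_congr hx, eventually_const]

theorem ergodicSMul_of_smul_invariant_sets [TopologicalSpace G] [IsTopologicalGroup G]
    [LocallyCompactSpace G] [SecondCountableTopology G] [TopologicalSpace X] [BorelSpace X]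
    [ContinuousSMul G X] [SFinite μ] [SMulInvariantMeasure G X μ]
    (herg : ∀ t : Set X, MeasurableSet t → (∀ g : G, (g • ·) ⁻¹' t = t) →
      EventuallyConst t (ae μ)) : ErgodicSMul G X μ where
  aeconst_of_forall_preimage_smul_ae_eq {s} hs hinv := by
    borelize G
    obtain ⟨t, ht, htinv, hts⟩ := exists_smul_invariant_ae_eq Measure.haar hs hinv
    exact (herg t ht htinv).congr hts

theorem eventuallyConst_ae_iff_measure_eq_zero_or_one [IsProbabilityMeasure μ] {s : Set X}
    (hs : MeasurableSet s) : EventuallyConst s (ae μ) ↔ μ s = 0 ∨ μ s = 1 := by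
  rw [eventuallyConst_set', ae_eq_empty, ae_eq_univ, prob_compl_eq_zero_iff hs]

theorem aeconst_of_forall_upperTransvection_smul_ae_eq {𝕜 : Type*} [Field 𝕜] [TopologicalSpace 𝕜]
    [IsTopologicalRing 𝕜] [(𝓝[≠] (0 : 𝕜)).NeBot] [FirstCountableTopology 𝕜] [TopologicalSpace X]
    [BorelSpace X] [MulAction SL(2, 𝕜) X] [ContinuousSMul SL(2, 𝕜) X] [IsFiniteMeasure μ]
    [ErgodicSMul SL(2, 𝕜) X μ] {s : Set X} (hs : MeasurableSet s)
    (hupper : ∀ b : 𝕜, upperTransvection b • s =ᵐ[μ] s) : EventuallyConst s (ae μ) :=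
  aeconst_of_forall_smul_ae_eq SL(2, 𝕜) hs.nullMeasurableSet fun g ↦
    symmDiffSeminorm_eq_zero_iff.1 <|
      groupSeminorm_eq_zero_of_upperTransvection (tendsto_symmDiffSeminorm_nhds_one hs)
        (fun b ↦ symmDiffSeminorm_eq_zero_iff.2 (hupper b)) g

end ErgodicAction

section RightQuot

variable {G : Type*} [Group G] {Γ : Subgroup G}

/-- The left action of `G` on `Γ\G` underlying right translation: `g • Γx = Γxg⁻¹`. -/
instance rightQuotMulAction : MulAction G (RightQuot Γ) where
  smul g := rightTranslate Γ g⁻¹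
  one_smul := by
    rintro ⟨x⟩
    exact congrArg (Quotient.mk _) (by simp)
  mul_smul g h := by
    rintro ⟨x⟩
    exact congrArg (Quotient.mk _) (by simp [mul_assoc])

instance rightQuot_continuousSMul [TopologicalSpace G] [IsTopologicalGroup G] :
    ContinuousSMul G (RightQuot Γ) where
  continuous_smul := by
    have hmk : IsOpenQuotientMap (Quotient.mk (QuotientGroup.rightRel Γ)) :=
      MulAction.isOpenQuotientMap_quotientMk
    refine (IsOpenQuotientMap.id.prodMap hmk).isQuotientMap.continuous_iff.2 ?_
    exact hmk.continuous.comp (continuous_snd.mul continuous_fst.inv)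

end RightQuot

theorem mautner_unipotent_ergodicity_general {𝕜 G : Type*} [Field 𝕜] [TopologicalSpace 𝕜]
    [IsTopologicalRing 𝕜] [T1Space 𝕜] [LocallyCompactSpace 𝕜] [SecondCountableTopology 𝕜]
    [(𝓝[≠] (0 : 𝕜)).NeBot] [Group G] [TopologicalSpace G] [IsTopologicalGroup G] (Γ : Subgroup G)
    (θ : SL(2, 𝕜) →* G) (hθ : Continuous θ) (μ : Measure (RightQuot Γ)) [IsProbabilityMeasure μ]
    (hinv : ∀ g, Measure.map (rightTranslate Γ (θ g)) μ = μ)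
    (herg : ∀ s : Set (RightQuot Γ), MeasurableSet s →
      (∀ g, rightTranslate Γ (θ g) ⁻¹' s = s) → μ s = 0 ∨ μ s = 1)
    (s : Set (RightQuot Γ)) (hs : MeasurableSet s)
    (hupper : ∀ b : 𝕜, rightTranslate Γ (θ (upperTransvection b)) ⁻¹' s =ᵐ[μ] s) :
    μ s = 0 ∨ μ s = 1 := by
  let _ : MulAction SL(2, 𝕜) (RightQuot Γ) := MulAction.compHom _ θ
  have : ContinuousSMul SL(2, 𝕜) (RightQuot Γ) := MulAction.continuousSMul_compHom hθ
  have hsmul (g : SL(2, 𝕜)) :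
      (g⁻¹ • · : RightQuot Γ → RightQuot Γ) = rightTranslate Γ (θ g) := by
    ext x
    change rightTranslate Γ (θ g⁻¹)⁻¹ x = _
    rw [map_inv, inv_inv]
  have : SMulInvariantMeasure SL(2, 𝕜) (RightQuot Γ) μ := ⟨fun g t ht ↦ by
    rw [← Measure.map_apply (measurable_const_smul g) ht, ← inv_inv g, hsmul, hinv]⟩
  have : ErgodicSMul SL(2, 𝕜) (RightQuot Γ) μ :=
    ergodicSMul_of_smul_invariant_sets fun t ht hinvt ↦
      (eventuallyConst_ae_iff_measure_eq_zero_or_one ht).2 <| herg t ht fun g ↦ by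
        rw [← hsmul, hinvt]
  refine (eventuallyConst_ae_iff_measure_eq_zero_or_one hs).1 <|
    aeconst_of_forall_upperTransvection_smul_ae_eq hs fun b : 𝕜 ↦ ?_
  rw [← Set.preimage_smul_inv, hsmul]
  exact hupper b

/-- **Mautner ergodicity.**  If `μ` is an `H`-invariant and `H`-ergodic Borel probability
measure on `X = Γ\G`, where `H < G` is isomorphic as a topological group to `SL(2,ℝ)`, then
`μ` is already ergodic for the one-parameter unipotent subgroup `U` of `H` corresponding to
the upper unipotent subgroup of `SL(2,ℝ)`. -/
theorem mautner_unipotent_ergodicity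
    {E : Type*} [NormedAddCommGroup E] [NormedSpace ℝ E] [FiniteDimensional ℝ E]
    {G : Type*} [Group G] [TopologicalSpace G] [IsTopologicalGroup G]
    [ChartedSpace E G] [LieGroup (modelWithCornersSelf ℝ E) (⊤ : ℕ∞) G]
    (Γ : Subgroup G) [DiscreteTopology Γ]
    (H : Subgroup G)
    (θ : SL2R ≃* H) (hθ : Continuous θ) (hθsymm : Continuous θ.symm)
    (μ : Measure (RightQuot Γ)) [IsProbabilityMeasure μ]
    (hinv : ∀ h ∈ H, Measure.map (rightTranslate Γ h) μ = μ)
    (herg : ∀ s : Set (RightQuot Γ), MeasurableSet s →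
      (∀ h ∈ H, rightTranslate Γ h ⁻¹' s = s) → μ s = 0 ∨ μ s = 1) :
    ∀ s : Set (RightQuot Γ), MeasurableSet s →
      (∀ t : ℝ, rightTranslate Γ ((θ (upperUnipotent t) : H) : G) ⁻¹' s = s) →
      μ s = 0 ∨ μ s = 1 := by
  intro s hs hu
  exact mautner_unipotent_ergodicity_general Γ (H.subtype.comp θ.toMonoidHom)
    (continuous_subtype_val.comp hθ) μ (fun g ↦ hinv _ (θ g).2)
    (fun t ht hg ↦ herg t ht fun h hh ↦ by simpa using hg (θ.symm ⟨h, hh⟩))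
    s hs fun t ↦ .of_eq (upperUnipotent_eq_upperTransvection t ▸ hu t)
end

section
/- For every integer n ≥ 1 there exists a constant c > 0 depending only on n such that for every real polynomial q(s) = a₀ + a₁s + ⋯ + a_n s^n with max_{0≤i≤n} |a_i| ≥ 1, the Lebesgue measure of the set {s ∈ [0,1] : |q(s)| ≥ c} is at least 0.9. -/
open MeasureTheory

/-!
A nonzero polynomial vanishes only on a null set. If no constant worked on a compact set of
nonzero coefficient vectors, there would be vectors `v k` in it, converging to some `w`, whose
polynomials exceed `1 / (k + 1)` only on a set of measure at most `θ`. Almost every point has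
`w(s) ≠ 0`, hence lies in all but finitely many of these sets, and continuity of the measure from
below gives a contradiction. Homogeneity passes from the compact shell `r ≤ ‖v‖ ≤ 1` to all
vectors.
-/

open Filter Set
open scoped ENNReal Topology

section Measure

variable {α : Type*} [MeasurableSpace α] {μ : Measure α} {θ : ℝ≥0∞}

theorem eventually_lt_measure_of_ae_eventually_mem {A : ℕ → Set α}
    (hA : ∀ᵐ s ∂μ, ∀ᶠ k in atTop, s ∈ A k) (hθ : θ < μ univ) :
    ∀ᶠ k in atTop, θ < μ (A k) := by
  let B : ℕ → Set α := fun N ↦ {s | ∀ k ≥ N, s ∈ A k}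
  have B_mono : Monotone B := fun M N hMN s hs k hk ↦ hs k (hMN.trans hk)
  have B_ae : ⋃ N, B N =ᵐ[μ] univ := by
    refine eventuallyEq_univ.2 (hA.mono fun s hs ↦ ?_)
    exact mem_iUnion.2 (eventually_atTop.1 hs)
  have B_tendsto : Tendsto (fun N ↦ μ (B N)) atTop (𝓝 (μ univ)) :=
    measure_congr B_ae ▸ tendsto_measure_iUnion_atTop B_mono
  filter_upwards [B_tendsto.eventually_const_lt hθ] with N hN
  exact hN.trans_le (measure_mono fun s hs ↦ hs N le_rfl)

theorem exists_pos_forall_lt_measure_of_isSeqCompact {X : Type*} [TopologicalSpace X] {K : Set X}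
    (hK : IsSeqCompact K) {f : X → α → ℝ}
    (hf : ∀ᵐ s ∂μ, LowerSemicontinuousOn (f · s) K)
    (f_pos : ∀ x ∈ K, ∀ᵐ s ∂μ, 0 < f x s) (hθ : θ < μ univ) :
    ∃ c > 0, ∀ x ∈ K, θ < μ {s | c ≤ f x s} := by
  by_contra! h
  choose x x_mem hx using fun k : ℕ ↦ h (1 / (k + 1)) Nat.one_div_pos_of_nat
  obtain ⟨y, y_mem, φ, φ_mono, x_tendsto⟩ := hK x_mem
  have x_tendsto_within : Tendsto (x ∘ φ) atTop (𝓝[K] y) :=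
    tendsto_nhdsWithin_iff.2 ⟨x_tendsto, .of_forall fun k ↦ x_mem (φ k)⟩
  have eventually_large :
      ∀ᵐ s ∂μ, ∀ᶠ k in atTop, s ∈ {s | 1 / ((φ k : ℝ) + 1) ≤ f (x (φ k)) s} := by
    filter_upwards [hf, f_pos y y_mem] with s f_lsc fys_pos
    obtain ⟨δ, δ_pos, hδ⟩ := exists_between fys_pos
    have threshold_lt : ∀ᶠ k in atTop, 1 / ((φ k : ℝ) + 1) < δ :=
      φ_mono.tendsto_atTop.eventually
        (tendsto_one_div_add_atTop_nhds_zero_nat.eventually_lt_const δ_pos)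
    filter_upwards [threshold_lt, x_tendsto_within.eventually (f_lsc y y_mem δ hδ)] with k h₁ h₂
    exact (h₁.trans h₂).le
  obtain ⟨k, hk⟩ := (eventually_lt_measure_of_ae_eventually_mem eventually_large hθ).exists
  exact hk.not_ge (hx (φ k))

theorem exists_pos_forall_lt_measure_mul_norm_le {𝕜 V F : Type*} [NontriviallyNormedField 𝕜]
    [ProperSpace 𝕜] [NormedAddCommGroup V] [NormedSpace 𝕜 V] [FiniteDimensional 𝕜 V]
    [NormedAddCommGroup F] [NormedSpace 𝕜 F] {T : α → V →ₗ[𝕜] F}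
    (hT : ∀ v ≠ 0, ∀ᵐ s ∂μ, T s v ≠ 0) (hθ : θ < μ univ) :
    ∃ c > 0, ∀ v, θ < μ {s | c * ‖v‖ ≤ ‖T s v‖} := by
  have : ProperSpace V := FiniteDimensional.proper 𝕜 V
  obtain ⟨b, hb⟩ := NormedField.exists_one_lt_norm 𝕜
  -- A shell instead of the unit sphere: a line in `V` need not contain a vector of norm `1`.
  let shell : Set V := Metric.closedBall 0 1 ∩ {v | 1 / ‖b‖ ≤ ‖v‖}
  have shell_compact : IsCompact shell :=
    (isCompact_closedBall 0 1).inter_right (isClosed_le continuous_const continuous_norm)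
  have shell_ne_zero : ∀ v ∈ shell, v ≠ 0 := fun v hv ↦
    norm_pos_iff.1 ((by positivity : 0 < 1 / ‖b‖).trans_le hv.2)
  obtain ⟨c, c_pos, hc⟩ := exists_pos_forall_lt_measure_of_isSeqCompact shell_compact.isSeqCompact
    (f := fun v s ↦ ‖T s v‖)
    (.of_forall fun s ↦
      (T s).continuous_of_finiteDimensional.norm.lowerSemicontinuous.lowerSemicontinuousOn _)
    (fun v hv ↦ (hT v (shell_ne_zero v hv)).mono fun s ↦ norm_pos_iff.2) hθ
  refine ⟨c, c_pos, fun v ↦ ?_⟩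
  obtain rfl | hv := eq_or_ne v 0
  · simpa using hθ
  obtain ⟨d, hd, norm_lt, le_norm, -⟩ := rescale_to_shell hb one_pos hv
  have mem_shell : d • v ∈ shell := ⟨mem_closedBall_zero_iff.2 norm_lt.le, le_norm⟩
  refine (hc (d • v) mem_shell).trans_le (measure_mono fun s hs ↦ ?_)
  refine le_of_mul_le_mul_left ?_ (norm_pos_iff.2 hd)
  calc ‖d‖ * (c * ‖v‖) = c * ‖d • v‖ := by rw [norm_smul]; ring
    _ ≤ c := mul_le_of_le_one_right c_pos.le norm_lt.le
    _ ≤ ‖T s (d • v)‖ := hs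
    _ = ‖d‖ * ‖T s v‖ := by rw [map_smul, norm_smul]

end Measure

theorem finite_setOf_sum_mul_pow_eq_zero {R : Type*} [CommRing R] [IsDomain R] {n : ℕ}
    {v : Fin n → R} (hv : v ≠ 0) : {s : R | ∑ i, v i * s ^ (i : ℕ) = 0}.Finite := by
  classical
  have ofFn_ne_zero : Polynomial.ofFn n v ≠ 0 :=
    (map_ne_zero_iff _ (Polynomial.injective_ofFn n)).2 hv
  simpa [Polynomial.IsRoot, Polynomial.ofFn_eq_sum_monomial, Polynomial.eval_finsetSum] using
    Polynomial.finite_setOfPred_isRoot ofFn_ne_zero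

theorem polynomial_large_on_most_of_unit_interval_general {𝕜 : Type*} [NontriviallyNormedField 𝕜]
    [ProperSpace 𝕜] [MeasurableSpace 𝕜] {μ : Measure 𝕜} [NullSingletonClass μ] {S : Set 𝕜}
    (hS : NullMeasurableSet S μ) {θ : ℝ≥0∞} (hθ : θ < μ S) (n : ℕ) :
    ∃ c > (0 : ℝ), ∀ a : ℕ → 𝕜, (∃ i ≤ n, 1 ≤ ‖a i‖) →
      θ < μ {s | s ∈ S ∧ c ≤ ‖∑ i ∈ Finset.range (n + 1), a i * s ^ i‖} := by
  obtain ⟨c, c_pos, hc⟩ := exists_pos_forall_lt_measure_mul_norm_le (μ := μ.restrict S)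
    (T := fun s ↦ Fintype.linearCombination 𝕜 fun i : Fin (n + 1) ↦ s ^ (i : ℕ))
    (fun v hv ↦ measure_eq_zero_iff_ae_notMem.1
      ((finite_setOf_sum_mul_pow_eq_zero hv).measure_zero (μ.restrict S)))
    (by rwa [Measure.restrict_apply_univ])
  refine ⟨c, c_pos, fun a ⟨i, hi, one_le⟩ ↦ ?_⟩
  let v : Fin (n + 1) → 𝕜 := fun j ↦ a j
  have one_le_norm : 1 ≤ ‖v‖ := one_le.trans (norm_le_pi_norm v ⟨i, Nat.lt_succ_of_le hi⟩)
  have hv := hc v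
  rw [Measure.restrict_apply₀' hS] at hv
  refine hv.trans_le (measure_mono fun s ⟨hs, s_mem⟩ ↦ ⟨s_mem, ?_⟩)
  rw [Finset.sum_range]
  exact (le_mul_of_one_le_right c_pos.le one_le_norm).trans hs

/-- For every `n ≥ 1` there is a constant `c > 0`, depending only on `n`, such that every
real polynomial `q(s) = a₀ + a₁ s + ⋯ + a_n s^n` with some coefficient of absolute value
at least `1` satisfies `|q(s)| ≥ c` on a subset of `[0,1]` of Lebesgue measure at
least `0.9`. -/
theorem polynomial_large_on_most_of_unit_interval (n : ℕ) (hn : 1 ≤ n) :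
    ∃ c > (0 : ℝ), ∀ a : ℕ → ℝ, (∃ i ≤ n, 1 ≤ |a i|) →
      (9 / 10 : ENNReal) ≤
        volume {s : ℝ | s ∈ Set.Icc (0 : ℝ) 1 ∧
          c ≤ |∑ i ∈ Finset.range (n + 1), a i * s ^ i|} := by
  have hθ : (9 / 10 : ℝ≥0∞) < volume (Icc (0 : ℝ) 1) := by
    rw [Real.volume_Icc, sub_zero, ENNReal.ofReal_one, ENNReal.div_lt_iff (by simp) (by simp)]
    norm_num
  obtain ⟨c, c_pos, hc⟩ :=
    polynomial_large_on_most_of_unit_interval_general measurableSet_Icc.nullMeasurableSet hθ n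
  exact ⟨c, c_pos, fun a ha ↦ (hc a ha).le⟩
end

section
/- Let S be a closed subgroup of GL(m,ℝ). Suppose (w_k) is a sequence of nonzero real m×m matrices with w_k → 0, exp(w_k) ∈ S for all k, and w_k/‖w_k‖ → u for some matrix u. Then the one-parameter subgroup generated by u lies in S: exp(t·u) ∈ S for all t ∈ ℝ. -/
open scoped MatrixGroups

attribute [local instance] Matrix.normedAddCommGroup Matrix.normedSpace

/-!
Write `rᵢ = ‖wᵢ‖` and choose integers `nᵢ` with `nᵢ * rᵢ → t`. Then
`nᵢ • wᵢ = (nᵢ * rᵢ) • (rᵢ⁻¹ • wᵢ) → t • u`, so `exp (t • u)` is the limit of the powers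
`exp (wᵢ) ^ nᵢ`, all of which lie in the closed subgroup `S`.
-/

open Filter Topology NormedSpace

section IntegerMultiples

variable {K E ι : Type*} [Field K] [LinearOrder K] [IsStrictOrderedRing K] [FloorRing K]
  [TopologicalSpace K] [OrderTopology K] [AddCommGroup E] [Module K E] [TopologicalSpace E]
  [ContinuousSMul K E] {l : Filter ι} {r : ι → K}

theorem tendsto_floor_div_mul_self (hr : Tendsto r l (𝓝[≠] 0)) (t : K) :
    Tendsto (fun i ↦ ⌊t / r i⌋ * r i) l (𝓝 t) := by
  obtain ⟨hr_zero, hr_ne⟩ := tendsto_nhdsWithin_iff.mp hr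
  have hfract : Tendsto (fun i ↦ Int.fract (t / r i) * r i) l (𝓝 0) := by
    refine bdd_le_mul_tendsto_zero' 1 (.of_forall fun i ↦ ?_) hr_zero
    simpa only [Int.abs_fract] using (Int.fract_lt_one (t / r i)).le
  have hsub : Tendsto (fun i ↦ t - Int.fract (t / r i) * r i) l (𝓝 t) := by
    simpa only [sub_zero] using hfract.const_sub t
  refine hsub.congr' ?_
  filter_upwards [hr_ne] with i hi
  rw [← Int.self_sub_floor, sub_mul, div_mul_cancel₀ t hi, sub_sub_cancel]

theorem tendsto_floor_div_zsmul {w : ι → E} {u : E} (hr : Tendsto r l (𝓝[≠] 0))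
    (hu : Tendsto (fun i ↦ (r i)⁻¹ • w i) l (𝓝 u)) (t : K) :
    Tendsto (fun i ↦ ⌊t / r i⌋ • w i) l (𝓝 (t • u)) := by
  refine ((tendsto_floor_div_mul_self hr t).smul hu).congr' ?_
  filter_upwards [(tendsto_nhdsWithin_iff.mp hr).2] with i hi
  rw [mul_smul, smul_inv_smul₀ hi, Int.cast_smul_eq_zsmul]

theorem smul_mem_of_isClosed_of_zsmul_mem {C : Set E} (hC : IsClosed C)
    (hC_zsmul : ∀ x ∈ C, ∀ n : ℤ, n • x ∈ C) {w : ι → E} {u : E} (hr : Tendsto r l (𝓝[≠] 0))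
    (hwC : ∃ᶠ i in l, w i ∈ C) (hu : Tendsto (fun i ↦ (r i)⁻¹ • w i) l (𝓝 u)) (t : K) :
    t • u ∈ C :=
  hC.mem_of_frequently_of_tendsto (hwC.mono fun i hi ↦ hC_zsmul (w i) hi ⌊t / r i⌋)
    (tendsto_floor_div_zsmul hr hu t)

end IntegerMultiples

section ExpUnit

variable {A : Type*} [NormedRing A] [NormedAlgebra ℚ A] [CompleteSpace A]

/-- The exponential of a Banach algebra as a map into its group of units. -/
noncomputable def expUnit (x : A) : Aˣ where
  val := exp x
  inv := exp (-x)
  val_inv := by rw [← exp_add_of_commute (Commute.refl x).neg_right, add_neg_cancel, exp_zero]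
  inv_val := by rw [← exp_add_of_commute (Commute.refl x).neg_left, neg_add_cancel, exp_zero]

theorem continuous_expUnit : Continuous (expUnit : A → Aˣ) :=
  Units.continuous_iff.mpr ⟨exp_continuous, exp_continuous.comp continuous_neg⟩

theorem expUnit_neg (x : A) : expUnit (-x) = (expUnit x)⁻¹ :=
  Units.ext rfl

theorem expUnit_nsmul (n : ℕ) (x : A) : expUnit (n • x) = expUnit x ^ n :=
  Units.ext (exp_nsmul n x)

theorem expUnit_zsmul (n : ℤ) (x : A) : expUnit (n • x) = expUnit x ^ n := by
  obtain ⟨k, rfl | rfl⟩ := n.eq_nat_or_neg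
  · rw [natCast_zsmul, zpow_natCast, expUnit_nsmul]
  · rw [neg_zsmul, natCast_zsmul, expUnit_neg, expUnit_nsmul, zpow_neg, zpow_natCast]

theorem expUnit_mem_iff_exists {S : Subgroup Aˣ} {x : A} :
    expUnit x ∈ S ↔ ∃ g ∈ S, (g : A) = exp x :=
  ⟨fun hx ↦ ⟨expUnit x, hx, rfl⟩, fun ⟨_, hg, hgx⟩ ↦ (Units.ext hgx : _ = expUnit x) ▸ hg⟩

end ExpUnit

theorem one_parameter_subgroup_of_limit_general {A ι : Type*} [NormedRing A] [NormedAlgebra ℝ A]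
    [CompleteSpace A] {S : Subgroup Aˣ} (hS : IsClosed (S : Set Aˣ)) {l : Filter ι} {r : ι → ℝ}
    (hr : Tendsto r l (𝓝[≠] 0)) {w : ι → A} (hwS : ∃ᶠ i in l, ∃ g ∈ S, (g : A) = exp (w i))
    {u : A} (hu : Tendsto (fun i ↦ (r i)⁻¹ • w i) l (𝓝 u)) (t : ℝ) :
    ∃ g ∈ S, (g : A) = exp (t • u) := by
  let : NormedAlgebra ℚ A := NormedAlgebra.restrictScalars ℚ ℝ A
  simp only [← expUnit_mem_iff_exists] at hwS ⊢
  have hzsmul (x : A) (hx : expUnit x ∈ S) (n : ℤ) : expUnit (n • x) ∈ S :=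
    expUnit_zsmul n x ▸ S.zpow_mem hx n
  exact smul_mem_of_isClosed_of_zsmul_mem (hS.preimage continuous_expUnit) hzsmul hr hwS hu t

/-- If `S` is a closed subgroup of `GL(m,ℝ)`, `(w_k)` is a sequence of nonzero matrices
with `w_k → 0`, `exp(w_k) ∈ S` for all `k`, and `w_k/‖w_k‖ → u`, then the one-parameter
subgroup `{exp(t·u) : t ∈ ℝ}` lies in `S`. -/
theorem one_parameter_subgroup_of_limit
    (m : ℕ) (S : Subgroup (GL (Fin m) ℝ)) (hS : IsClosed (S : Set (GL (Fin m) ℝ)))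
    (w : ℕ → Matrix (Fin m) (Fin m) ℝ) (hw0 : ∀ k, w k ≠ 0)
    (hwlim : Filter.Tendsto w Filter.atTop (nhds 0))
    (hwS : ∀ k, ∃ g ∈ S, (g : Matrix (Fin m) (Fin m) ℝ) = NormedSpace.exp (w k))
    (u : Matrix (Fin m) (Fin m) ℝ)
    (hu : Filter.Tendsto (fun k => ‖w k‖⁻¹ • w k) Filter.atTop (nhds u)) :
    ∀ t : ℝ, ∃ g ∈ S, (g : Matrix (Fin m) (Fin m) ℝ) = NormedSpace.exp (t • u) := by
  have hr : Tendsto (fun k ↦ ‖w k‖) atTop (𝓝[≠] 0) :=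
    tendsto_nhdsWithin_iff.mpr ⟨tendsto_zero_iff_norm_tendsto_zero.mp hwlim,
      .of_forall fun k ↦ norm_ne_zero_iff.mpr (hw0 k)⟩
  -- The entrywise norm is not submultiplicative; this one is, and induces the same topology.
  let : NormedRing (Matrix (Fin m) (Fin m) ℝ) := Matrix.linftyOpNormedRing
  let : NormedAlgebra ℝ (Matrix (Fin m) (Fin m) ℝ) := Matrix.linftyOpNormedAlgebra
  have : @CompleteSpace (Matrix (Fin m) (Fin m) ℝ) PseudoMetricSpace.toUniformSpace :=
    FiniteDimensional.complete ℝ _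
  exact one_parameter_subgroup_of_limit_general hS hr (.of_forall hwS) hu
end
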